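/- Let F ⊆ (Fin k → ZMod 2) be a binary matroid and suppose there is a chain F = F_0 ⊇ F_1 ⊇ ⋯ ⊇ F_d of subsets such that F_d is a singleton and, for each i with 1 ≤ i ≤ d, there is a matroid homomorphism r_i : F_{i-1} → F_{i-1} whose image is contained in F_i, which fixes every point of F_i, and which is equal to or adjacent to the identity in the recolouring graph mCol(F_{i-1}, F_{i-1}) (i.e. F dismantles to a one-point matroid). Then for every binary matroid E ⊆ (Fin m → ZMod 2), any two matroid homomorphisms τ, τ' : E → F are joined by a walk in mCol(E, F). -/

import Mathlib

/-- A circuit of a binary matroid with point set `E`: a minimal nonempty subset summing to 0. -/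
def IsCircuit {P : Type*} [AddCommGroup P] (E Z : Finset P) : Prop :=
  Z ⊆ E ∧ Z.Nonempty ∧ ∑ e ∈ Z, e = 0 ∧
    ∀ Z' ⊆ Z, Z'.Nonempty → ∑ e ∈ Z', e = 0 → Z' = Z

/-- A cocircuit: a minimal nonempty subset meeting every circuit evenly. -/
def IsCocircuit {P : Type*} [AddCommGroup P] [DecidableEq P] (E C : Finset P) : Prop :=
  C ⊆ E ∧ C.Nonempty ∧ (∀ Z, IsCircuit E Z → Even (C ∩ Z).card) ∧
    ∀ C' ⊆ C, C'.Nonempty → (∀ Z, IsCircuit E Z → Even (C' ∩ Z).card) → C' = C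

/-- A matroid homomorphism from the matroid on `E` to the matroid on `F`. -/
def IsMHom {P Q : Type*} [AddCommGroup P] [AddCommGroup Q]
    (E : Finset P) (F : Finset Q) (τ : P → Q) : Prop :=
  (∀ e ∈ E, τ e ∈ F) ∧ ∀ Z, IsCircuit E Z → ∑ e ∈ Z, τ e = 0

/-- Adjacency in the recolouring graph: the maps differ exactly on a cocircuit. -/
def MAdj {P Q : Type*} [AddCommGroup P] [AddCommGroup Q] [DecidableEq P]
    (E : Finset P) (τ τ' : P → Q) : Prop :=
  ∃ C, IsCocircuit E C ∧ ∀ e ∈ E, (τ e ≠ τ' e ↔ e ∈ C)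

/-- One step of a walk in `mCol(E,F)`: both maps are homomorphisms and they are
equal (as maps on `E`) or adjacent. -/
def MStep {P Q : Type*} [AddCommGroup P] [AddCommGroup Q] [DecidableEq P]
    (E : Finset P) (F : Finset Q) (τ τ' : P → Q) : Prop :=
  IsMHom E F τ ∧ IsMHom E F τ' ∧ ((∀ e ∈ E, τ e = τ' e) ∨ MAdj E τ τ')

/-- Joined by a walk in the recolouring graph `mCol(E,F)`. -/
def MWalk {P Q : Type*} [AddCommGroup P] [AddCommGroup Q] [DecidableEq P]
    (E : Finset P) (F : Finset Q) : (P → Q) → (P → Q) → Prop :=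
  Relation.ReflTransGen (MStep E F)

/-- The indicator vector of a vertex. -/
def ind {V : Type*} [DecidableEq V] (u : V) : V → ZMod 2 := Pi.single u 1

/-- The decision graph of a set `F` of nonzero vectors. -/
def decisionGraph {m : ℕ} (F : Finset (Fin m → ZMod 2)) : SimpleGraph (Fin m → ZMod 2) where
  Adj v w := v + w ∈ F ∧ v ≠ w
  symm := by
    refine ⟨?_⟩
    intro v w h
    exact ⟨by rw [add_comm]; exact h.1, h.2.symm⟩
  loopless := by
    refine ⟨?_⟩
    intro v h
    exact h.2 rfl

/-- The weight of a vector: its number of nonzero coordinates. -/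
def wt {n : ℕ} (e : Fin n → ZMod 2) : ℕ := (Finset.univ.filter fun i => e i ≠ 0).card

/-!
Call a map on `E` a cocycle if its sum over every circuit vanishes; then its sum over every cycle
vanishes, since a cycle splits into circuits, and so homomorphisms compose.

If two adjacent homomorphisms differ exactly on the cocircuit `C`, then composing their difference
with any linear functional yields a binary cocycle supported in `C`, whose support is `∅` or `C`
by minimality. Hence the difference is constant on `C`: the two maps differ by a single vector `c`.

Thus a dismantling map `r` moves points only by one vector `c`, so `τ` and `r ∘ τ` differ only by
`c`. Their disagreement set then meets every circuit evenly, and recolouring it one cocircuit at a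
time is a walk from `τ` to `r ∘ τ` in which every colour used is a value of `τ` or of `r ∘ τ`.
Descending the chain moves any two homomorphisms into a one-point matroid, where they coincide.
-/

section Cocycles

variable {P Q R : Type*} [AddCommGroup P] [AddCommGroup Q] [AddCommGroup R]
  {E Z : Finset P} {F : Finset Q}

/-- An `R`-valued cocycle of the matroid on `E`: a map whose sum over each circuit vanishes. Only
its values on `E` matter. A homomorphism `E → F` is a cocycle with values in `F`. -/
def IsCocycle (E : Finset P) (g : P → R) : Prop :=
  ∀ Z, IsCircuit E Z → ∑ e ∈ Z, g e = 0

theorem IsMHom.isCocycle {τ : P → Q} (hτ : IsMHom E F τ) : IsCocycle E τ := hτ.2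

namespace IsCocycle

variable {g h : P → R}

theorem congr (hg : IsCocycle E g) (hgh : ∀ e ∈ E, g e = h e) : IsCocycle E h := fun Z hZ ↦ by
  rw [← hg Z hZ]
  exact Finset.sum_congr rfl fun e he ↦ (hgh e (hZ.1 he)).symm

theorem add (hg : IsCocycle E g) (hh : IsCocycle E h) : IsCocycle E fun e ↦ g e + h e :=
  fun Z hZ ↦ by rw [Finset.sum_add_distrib, hg Z hZ, hh Z hZ, add_zero]

theorem sub (hg : IsCocycle E g) (hh : IsCocycle E h) : IsCocycle E fun e ↦ g e - h e :=
  fun Z hZ ↦ by rw [Finset.sum_sub_distrib, hg Z hZ, hh Z hZ, sub_zero]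

theorem map {S : Type*} [AddCommGroup S] (hg : IsCocycle E g) (f : R →+ S) :
    IsCocycle E fun e ↦ f (g e) :=
  fun Z hZ ↦ by rw [← map_sum, hg Z hZ, map_zero]

end IsCocycle

theorem exists_isCircuit_subset (hZE : Z ⊆ E) (hZ : Z.Nonempty) (hsum : ∑ e ∈ Z, e = 0) :
    ∃ Y ⊆ Z, IsCircuit E Y := by
  obtain ⟨Y, hYZ, hY⟩ := exists_minimal_le_of_wellFoundedLT
    (fun Y : Finset P ↦ Y.Nonempty ∧ ∑ e ∈ Y, e = 0) Z ⟨hZ, hsum⟩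
  exact ⟨Y, hYZ, hYZ.trans hZE, hY.prop.1, hY.prop.2,
    fun Y' hY'Y hne hsum' ↦ hY.eq_of_le ⟨hne, hsum'⟩ hY'Y⟩

theorem IsCocycle.sum_eq_zero {g : P → R} (hg : IsCocycle E g) (hZE : Z ⊆ E)
    (hsum : ∑ e ∈ Z, e = 0) : ∑ e ∈ Z, g e = 0 := by
  classical
  induction Z using Finset.strongInduction with
  | H Z ih =>
    obtain rfl | hne := Z.eq_empty_or_nonempty
    · exact Finset.sum_empty
    obtain ⟨Y, hYZ, hY⟩ := exists_isCircuit_subset hZE hne hsum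
    have hsum_sdiff : ∑ e ∈ Z \ Y, e = 0 := by
      rw [Finset.sum_sdiff_eq_sub hYZ, hsum, hY.2.2.1, sub_zero]
    rw [← Finset.sum_sdiff hYZ, hg Y hY, add_zero]
    exact ih _ (Finset.sdiff_ssubset hYZ hY.2.1) (Finset.sdiff_subset.trans hZE) hsum_sdiff

end Cocycles

section Composition

variable {P Q R : Type*} [AddCommGroup P] [AddCommGroup Q] [AddCommGroup R]
  [Module (ZMod 2) Q] [Module (ZMod 2) R] {E : Finset P} {F : Finset Q}

theorem nsmul_eq_ite_odd (n : ℕ) (x : R) : n • x = if Odd n then x else 0 := by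
  rw [← Nat.cast_smul_eq_nsmul (ZMod 2)]
  split_ifs with hn
  · rw [ZMod.natCast_eq_one_iff_odd.2 hn, one_smul]
  · rw [ZMod.natCast_eq_zero_iff_even.2 (Nat.not_odd_iff_even.1 hn), zero_smul]

theorem sum_comp_eq_sum_filter_odd {ι κ : Type*} [DecidableEq κ] (g : κ → R) (τ : ι → κ)
    (Z : Finset ι) :
    ∑ e ∈ Z, g (τ e) = ∑ y ∈ Z.image τ with Odd {e ∈ Z | τ e = y}.card, g y := by
  simp only [Finset.sum_comp g τ, nsmul_eq_ite_odd, Finset.sum_filter]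

theorem IsCocycle.comp {τ : P → Q} {g : Q → R} (hg : IsCocycle F g) (hτ : IsMHom E F τ) :
    IsCocycle E (g ∘ τ) := by
  classical
  intro Z hZ
  have hodd : ∑ y ∈ Z.image τ with Odd {e ∈ Z | τ e = y}.card, y = 0 :=
    (sum_comp_eq_sum_filter_odd (fun y ↦ y) τ Z).symm.trans (hτ.isCocycle Z hZ)
  have himage : Z.image τ ⊆ F := Finset.image_subset_iff.2 fun e he ↦ hτ.1 e (hZ.1 he)
  refine (sum_comp_eq_sum_filter_odd g τ Z).trans ?_
  exact hg.sum_eq_zero ((Finset.filter_subset _ _).trans himage) hodd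

theorem IsMHom.comp {G : Finset R} {τ : P → Q} {r : Q → R} (hr : IsMHom F G r)
    (hτ : IsMHom E F τ) : IsMHom E G (r ∘ τ) :=
  ⟨fun e he ↦ hr.1 _ (hτ.1 e he), hr.isCocycle.comp hτ⟩

end Composition

theorem isMHom_id {P : Type*} [AddCommGroup P] (E : Finset P) : IsMHom E E id :=
  ⟨fun _ he ↦ he, fun _ hZ ↦ hZ.2.2.1⟩

theorem IsMHom.mono {P Q : Type*} [AddCommGroup P] [AddCommGroup Q] {E : Finset P}
    {F F' : Finset Q} {τ : P → Q} (hτ : IsMHom E F' τ) (hF : F' ⊆ F) : IsMHom E F τ :=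
  ⟨fun e he ↦ hF (hτ.1 e he), hτ.2⟩

section Cocircuits

variable {P R : Type*} [AddCommGroup P] [AddCommGroup R] [DecidableEq P] {E C D : Finset P}

/-- The set form of a binary cocycle: `D` is the support of a `ZMod 2`-valued cocycle. Cocircuits
are the minimal nonempty subsets of `E` with this property. -/
def MeetsCircuitsEvenly (E D : Finset P) : Prop :=
  ∀ Z, IsCircuit E Z → Even (D ∩ Z).card

theorem exists_isCocircuit_subset (hDE : D ⊆ E) (hD : D.Nonempty)
    (heven : MeetsCircuitsEvenly E D) : ∃ C ⊆ D, IsCocircuit E C := by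
  obtain ⟨C, hCD, hC⟩ := exists_minimal_le_of_wellFoundedLT
    (fun C : Finset P ↦ C.Nonempty ∧ MeetsCircuitsEvenly E C) D ⟨hD, heven⟩
  exact ⟨C, hCD, hCD.trans hDE, hC.prop.1, hC.prop.2,
    fun C' hC'C hne heven' ↦ hC.eq_of_le ⟨hne, heven'⟩ hC'C⟩

variable [Module (ZMod 2) R]

theorem MeetsCircuitsEvenly.isCocycle_ite (hD : MeetsCircuitsEvenly E D) (c : R) :
    IsCocycle E fun e ↦ if e ∈ D then c else 0 := fun Z hZ ↦ by
  rw [Finset.sum_ite_mem, Finset.sum_const, Finset.inter_comm, nsmul_eq_ite_odd,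
    if_neg (Nat.not_odd_iff_even.2 (hD Z hZ))]

theorem IsCocycle.meetsCircuitsEvenly_of_ite {c : R} (hc : c ≠ 0)
    (hD : IsCocycle E fun e ↦ if e ∈ D then c else 0) : MeetsCircuitsEvenly E D := fun Z hZ ↦ by
  have hcard := hD Z hZ
  rw [Finset.sum_ite_mem, Finset.sum_const, Finset.inter_comm, nsmul_eq_ite_odd] at hcard
  exact Nat.not_odd_iff_even.1 fun hodd ↦ hc (by rwa [if_pos hodd] at hcard)

theorem IsCocycle.meetsCircuitsEvenly_filter_eq_one {g : P → ZMod 2} (hg : IsCocycle E g)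
    (hsupp : ∀ e ∈ E, e ∉ C → g e = 0) : MeetsCircuitsEvenly E {e ∈ C | g e = 1} := by
  have hite : ∀ z : ZMod 2, z = if z = 1 then 1 else 0 := by decide
  refine IsCocycle.meetsCircuitsEvenly_of_ite (one_ne_zero (α := ZMod 2)) (hg.congr fun e he ↦ ?_)
  by_cases heC : e ∈ C
  · simpa only [Finset.mem_filter, heC, true_and] using hite (g e)
  · simpa only [Finset.mem_filter, heC, false_and, if_false] using hsupp e he heC

theorem IsCocircuit.binary_cocycle_eq {g : P → ZMod 2} (hC : IsCocircuit E C) (hg : IsCocycle E g)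
    (hsupp : ∀ e ∈ E, e ∉ C → g e = 0) {x y : P} (hx : x ∈ C) (hy : y ∈ C) : g x = g y := by
  have heq_one : ∀ x ∈ C, ∀ y ∈ C, g x = 1 → g y = 1 := fun x hx y hy hgx ↦ by
    have hfilter : {e ∈ C | g e = 1} = C := hC.2.2.2 _ (Finset.filter_subset _ _)
      ⟨x, Finset.mem_filter.2 ⟨hx, hgx⟩⟩ (hg.meetsCircuitsEvenly_filter_eq_one hsupp)
    exact Finset.filter_eq_self.1 hfilter y hy
  have heq_of_iff : ∀ a b : ZMod 2, (a = 1 ↔ b = 1) → a = b := by decide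
  exact heq_of_iff _ _ ⟨heq_one x hx y hy, heq_one y hy x hx⟩

theorem IsCocircuit.cocycle_eq {g : P → R} (hC : IsCocircuit E C) (hg : IsCocycle E g)
    (hsupp : ∀ e ∈ E, e ∉ C → g e = 0) {x y : P} (hx : x ∈ C) (hy : y ∈ C) : g x = g y := by
  rw [← sub_eq_zero, ← Module.forall_dual_apply_eq_zero_iff (ZMod 2)]
  intro f
  rw [map_sub, sub_eq_zero]
  exact hC.binary_cocycle_eq (hg.map f.toAddMonoidHom)
    (fun e he heC ↦ by simp [hsupp e he heC]) hx hy

end Cocircuits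

section Disagreement

variable {α β : Type*} [DecidableEq β]

/-- The points of `E` at which two maps differ: the set still to be recoloured on the way from `τ`
to `τ'`. -/
def disagreement (E : Finset α) (τ τ' : α → β) : Finset α :=
  {e ∈ E | τ e ≠ τ' e}

theorem disagreement_piecewise [DecidableEq α] (E C : Finset α) (τ τ' : α → β) :
    disagreement E (C.piecewise τ' τ) τ' = disagreement E τ τ' \ C := by
  ext e
  by_cases heC : e ∈ C <;> simp [disagreement, heC]

end Disagreement

section Recolouring

variable {P Q : Type*} [AddCommGroup P] [AddCommGroup Q] [DecidableEq P]
  {E : Finset P} {F F' : Finset Q} {τ τ' : P → Q}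

theorem MStep.symm (h : MStep E F τ τ') : MStep E F τ' τ := by
  obtain ⟨hτ, hτ', heq | ⟨C, hC, hdiff⟩⟩ := h
  · exact ⟨hτ', hτ, .inl fun e he ↦ (heq e he).symm⟩
  · exact ⟨hτ', hτ, .inr ⟨C, hC, fun e he ↦ ne_comm.trans (hdiff e he)⟩⟩

theorem MWalk.symm (h : MWalk E F τ τ') : MWalk E F τ' τ :=
  have : Std.Symm (MStep E F) := ⟨fun _ _ ↦ MStep.symm⟩
  Std.Symm.symm (r := Relation.ReflTransGen (MStep E F)) _ _ h

theorem MWalk.mono (h : MWalk E F' τ τ') (hF : F' ⊆ F) : MWalk E F τ τ' :=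
  Relation.ReflTransGen.mono
    (fun _ _ hstep ↦ ⟨hstep.1.mono hF, hstep.2.1.mono hF, hstep.2.2⟩) _ _ h

theorem MWalk.of_eqOn (hτ : IsMHom E F τ) (hτ' : IsMHom E F τ') (h : ∀ e ∈ E, τ e = τ' e) :
    MWalk E F τ τ' :=
  .single ⟨hτ, hτ', .inl h⟩

variable [Module (ZMod 2) Q]

theorem MAdj.exists_eq_add (h : MAdj E τ τ') (hτ : IsCocycle E τ) (hτ' : IsCocycle E τ') :
    ∃ c, ∀ e ∈ E, τ e ≠ τ' e → τ' e = τ e + c := by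
  obtain ⟨C, hC, hdiff⟩ := h
  obtain ⟨x, hx⟩ := hC.2.1
  have hsupp : ∀ e ∈ E, e ∉ C → τ' e - τ e = 0 := fun e he heC ↦ by
    rw [sub_eq_zero, eq_comm, ← not_ne_iff, hdiff e he]
    exact heC
  refine ⟨τ' x - τ x, fun e he hne ↦ ?_⟩
  rw [← hC.cocycle_eq (hτ'.sub hτ) hsupp ((hdiff e he).1 hne) hx, add_sub_cancel]

theorem meetsCircuitsEvenly_disagreement [DecidableEq Q] {c : Q} (hc : c ≠ 0)
    (hτ : IsCocycle E τ) (hτ' : IsCocycle E τ')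
    (hdiff : ∀ e ∈ E, τ e ≠ τ' e → τ' e = τ e + c) :
    MeetsCircuitsEvenly E (disagreement E τ τ') := by
  refine IsCocycle.meetsCircuitsEvenly_of_ite hc ((hτ'.sub hτ).congr fun e he ↦ ?_)
  by_cases hne : τ e = τ' e
  · simp [disagreement, hne]
  · simp [disagreement, he, hdiff e he hne]

theorem IsMHom.piecewise {C : Finset P} {c : Q} (hτ : IsMHom E F τ) (hτ' : IsMHom E F τ')
    (hC : MeetsCircuitsEvenly E C) (hdiff : ∀ e ∈ C, τ' e = τ e + c) :
    IsMHom E F (C.piecewise τ' τ) := by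
  refine ⟨fun e he ↦ ?_, (hτ.isCocycle.add (hC.isCocycle_ite c)).congr fun e _ ↦ ?_⟩
  · exact C.piecewise_cases τ' τ (· ∈ F) (hτ'.1 e he) (hτ.1 e he)
  · by_cases heC : e ∈ C <;> simp [heC, hdiff]

theorem MWalk.of_eq_add {c : Q} (hτ : IsMHom E F τ) (hτ' : IsMHom E F τ')
    (hdiff : ∀ e ∈ E, τ e ≠ τ' e → τ' e = τ e + c) : MWalk E F τ τ' := by
  classical
  induction hD : disagreement E τ τ' using Finset.strongInduction generalizing τ with
  | H D ih =>
    subst hD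
    obtain hempty | hne := (disagreement E τ τ').eq_empty_or_nonempty
    · exact .of_eqOn hτ hτ' (by simpa [disagreement, Finset.filter_eq_empty_iff] using hempty)
    have hc : c ≠ 0 := by
      rintro rfl
      obtain ⟨e, he⟩ := hne
      obtain ⟨heE, hne⟩ := Finset.mem_filter.1 he
      exact hne (by rw [hdiff e heE hne, add_zero])
    obtain ⟨C, hCD, hC⟩ := exists_isCocircuit_subset (Finset.filter_subset _ _) hne
      (meetsCircuitsEvenly_disagreement hc hτ.isCocycle hτ'.isCocycle hdiff)
    have hne_of_mem : ∀ e ∈ C, τ e ≠ τ' e := fun e he ↦ (Finset.mem_filter.1 (hCD he)).2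
    have hσ : IsMHom E F (C.piecewise τ' τ) :=
      hτ.piecewise hτ' hC.2.2.1 fun e he ↦ hdiff e (hC.1 he) (hne_of_mem e he)
    have hstep : MStep E F τ (C.piecewise τ' τ) := by
      refine ⟨hτ, hσ, .inr ⟨C, hC, fun e _ ↦ ?_⟩⟩
      by_cases heC : e ∈ C <;> simp [heC, hne_of_mem]
    refine .head hstep (ih _ ?_ hσ (fun e he hne ↦ ?_) rfl)
    · rw [disagreement_piecewise]
      exact Finset.sdiff_ssubset hCD hC.2.1
    · by_cases heC : e ∈ C
      · simp [heC] at hne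
      · simpa [heC] using hdiff e he (by simpa [heC] using hne)

theorem MWalk.comp_of_eq_or_mAdj_id [DecidableEq Q] {r : Q → Q} (hr : IsMHom F F r)
    (hadj : (∀ y ∈ F, r y = y) ∨ MAdj F id r) (hτ : IsMHom E F τ) : MWalk E F τ (r ∘ τ) := by
  obtain hid | hadj := hadj
  · exact .of_eqOn hτ (hr.comp hτ) fun e he ↦ (hid _ (hτ.1 e he)).symm
  · obtain ⟨c, hc⟩ := hadj.exists_eq_add (isMHom_id F).isCocycle hr.isCocycle
    exact .of_eq_add hτ (hr.comp hτ) fun e he ↦ hc (τ e) (hτ.1 e he)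

end Recolouring

section Dismantling

variable {P Q : Type*} [AddCommGroup P] [AddCommGroup Q] [DecidableEq P]
  {E : Finset P} {F F' : Finset Q}

/-- Any two vertices of the recolouring graph `mCol(E, F)` are joined by a walk; the graph may be
empty. -/
def MConnected (E : Finset P) (F : Finset Q) : Prop :=
  ∀ ⦃τ τ' : P → Q⦄, IsMHom E F τ → IsMHom E F τ' → MWalk E F τ τ'

theorem mConnected_of_card_le_one (hF : F.card ≤ 1) : MConnected E F := fun _ _ hτ hτ' ↦
  .of_eqOn hτ hτ' fun e he ↦ Finset.card_le_one.1 hF _ (hτ.1 e he) _ (hτ'.1 e he)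

variable [DecidableEq Q] [Module (ZMod 2) Q]

theorem MConnected.of_dismantling_step {r : Q → Q} (h : MConnected E F') (hF : F' ⊆ F)
    (hr : IsMHom F F' r) (hadj : (∀ y ∈ F, r y = y) ∨ MAdj F id r) : MConnected E F := by
  intro τ τ' hτ hτ'
  have hdescend {σ : P → Q} (hσ : IsMHom E F σ) : MWalk E F σ (r ∘ σ) :=
    .comp_of_eq_or_mAdj_id (hr.mono hF) hadj hσ
  have hbelow : MWalk E F (r ∘ τ) (r ∘ τ') := (h (hr.comp hτ) (hr.comp hτ')).mono hF
  exact ((hdescend hτ).trans hbelow).trans (hdescend hτ').symm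

theorem stmt8_general (d : ℕ) (Fs : ℕ → Finset Q) (hchain : ∀ i < d, Fs (i + 1) ⊆ Fs i)
    (hlast : (Fs d).card ≤ 1)
    (hdis : ∀ i < d, ∃ r : Q → Q, IsMHom (Fs i) (Fs (i + 1)) r ∧
      ((∀ y ∈ Fs i, r y = y) ∨ MAdj (Fs i) id r))
    (E : Finset P) : MConnected E (Fs 0) := by
  refine Nat.decreasingInduction (motive := fun i _ ↦ MConnected E (Fs i)) (fun i hi ih ↦ ?_)
    (mConnected_of_card_le_one hlast) d.zero_le
  obtain ⟨r, hr, hadj⟩ := hdis i hi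
  exact ih.of_dismantling_step (hchain i hi) hr hadj

end Dismantling

theorem stmt8 (k : ℕ) (F : Finset (Fin k → ZMod 2)) (d : ℕ)
    (Fs : ℕ → Finset (Fin k → ZMod 2))
    (h0 : Fs 0 = F)
    (hchain : ∀ i < d, Fs (i + 1) ⊆ Fs i)
    (hlast : (Fs d).card = 1)
    (hdis : ∀ i < d, ∃ r : (Fin k → ZMod 2) → (Fin k → ZMod 2),
      IsMHom (Fs i) (Fs i) r ∧ (∀ e ∈ Fs i, r e ∈ Fs (i + 1)) ∧
      (∀ e ∈ Fs (i + 1), r e = e) ∧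
      ((∀ e ∈ Fs i, r e = e) ∨ MAdj (Fs i) (id : (Fin k → ZMod 2) → (Fin k → ZMod 2)) r))
    (m : ℕ) (E : Finset (Fin m → ZMod 2))
    (τ τ' : (Fin m → ZMod 2) → (Fin k → ZMod 2))
    (hτ : IsMHom E F τ) (hτ' : IsMHom E F τ') :
    MWalk E F τ τ' := by
  subst h0
  exact stmt8_general d Fs hchain hlast.le
    (fun i hi ↦ (hdis i hi).imp fun r ⟨hr, hmaps, _, hadj⟩ ↦ ⟨⟨hmaps, hr.2⟩, hadj⟩) E hτ hτ'
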